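/- Let (T_i)_{i=1}^∞ be a sequence of bounded linear operators from a separable Banach space X to a normed linear space Y. If the mean asymptotic relation MAsym(T_i) is dense in X×X and (T_i) is mean sensitive, then (T_i) has a dense absolutely mean irregular manifold, i.e., there exists a vector subspace Z of X that is dense in X and such that every non-zero vector of Z is absolutely mean irregular. -/

import Mathlib

open Filter Topology

variable {X Y : Type*} [NormedAddCommGroup X] [NormedSpace ℝ X]
  [NormedAddCommGroup Y] [NormedSpace ℝ Y]

/-- The Cesàro average `(1/n) ∑_{i=1}^{n} ‖T i x - T i y‖`. -/
noncomputable def mavg (T : ℕ → X →L[ℝ] Y) (x y : X) (n : ℕ) : ℝ :=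
  (∑ i ∈ Finset.Icc 1 n, ‖T i x - T i y‖) / n

/-- The Cesàro average `(1/n) ∑_{i=1}^{n} ‖T i x‖`. -/
noncomputable def avg (T : ℕ → X →L[ℝ] Y) (x : X) (n : ℕ) : ℝ :=
  (∑ i ∈ Finset.Icc 1 n, ‖T i x‖) / n

/-- `limsup_n (1/n) ∑_{i=1}^{n} ‖T i x - T i y‖`, computed in `EReal`. -/
noncomputable def msup (T : ℕ → X →L[ℝ] Y) (x y : X) : EReal :=
  Filter.limsup (fun n => (mavg T x y n : EReal)) Filter.atTop

/-- `liminf_n (1/n) ∑_{i=1}^{n} ‖T i x - T i y‖`, computed in `EReal`. -/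
noncomputable def minf (T : ℕ → X →L[ℝ] Y) (x y : X) : EReal :=
  Filter.liminf (fun n => (mavg T x y n : EReal)) Filter.atTop

/-- `limsup_n (1/n) ∑_{i=1}^{n} ‖T i x‖`, computed in `EReal`. -/
noncomputable def asup (T : ℕ → X →L[ℝ] Y) (x : X) : EReal :=
  Filter.limsup (fun n => (avg T x n : EReal)) Filter.atTop

/-- `liminf_n (1/n) ∑_{i=1}^{n} ‖T i x‖`, computed in `EReal`. -/
noncomputable def ainf (T : ℕ → X →L[ℝ] Y) (x : X) : EReal :=
  Filter.liminf (fun n => (avg T x n : EReal)) Filter.atTop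

/-- Mean sensitivity of the sequence `(T i)`. -/
def MeanSensitive (T : ℕ → X →L[ℝ] Y) : Prop :=
  ∃ δ : ℝ, 0 < δ ∧ ∀ x : X, ∀ ε : ℝ, 0 < ε →
    ∃ y : X, ‖x - y‖ < ε ∧ (δ : EReal) < msup T x y

theorem avg_add_le (T : ℕ → X →L[ℝ] Y) (n : ℕ) (x y : X) :
    avg T (x + y) n ≤ avg T x n + avg T y n := by
  unfold avg
  rw [← add_div, ← Finset.sum_add_distrib]
  gcongr with i hi
  rw [map_add]
  exact norm_add_le _ _

theorem avg_smul (T : ℕ → X →L[ℝ] Y) (n : ℕ) (c : ℝ) (x : X) :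
    avg T (c • x) n = |c| * avg T x n := by
  unfold avg
  rw [← mul_div_assoc, Finset.mul_sum]
  simp [norm_smul]

theorem avg_nonneg (T : ℕ → X →L[ℝ] Y) (n : ℕ) (x : X) : 0 ≤ avg T x n := by
  unfold avg
  positivity

theorem avg_zero (T : ℕ → X →L[ℝ] Y) (n : ℕ) : avg T 0 n = 0 := by
  simp [avg]

theorem avg_neg (T : ℕ → X →L[ℝ] Y) (n : ℕ) (x : X) : avg T (-x) n = avg T x n := by
  simp [avg]

theorem avg_cont (T : ℕ → X →L[ℝ] Y) (n : ℕ) : Continuous fun x => avg T x n := by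
  unfold avg
  fun_prop

theorem mavg_eq (T : ℕ → X →L[ℝ] Y) (x y : X) : mavg T x y = avg T (x - y) := by
  funext n
  simp [mavg, avg]

/-- Vectors whose averages tend to zero along a sequence of times. -/
def nullAlong (T : ℕ → X →L[ℝ] Y) (m : ℕ → ℕ) : Submodule ℝ X where
  carrier := {x | Tendsto (fun k => avg T x (m k)) atTop (𝓝 0)}
  zero_mem' := by simp [avg_zero]
  add_mem' := by
    intro x y hx hy
    have h := Tendsto.add hx hy
    rw [add_zero] at h
    exact squeeze_zero (fun k => avg_nonneg T _ _) (fun k => avg_add_le T _ x y) h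
  smul_mem' := by
    intro c x hx
    have h := Tendsto.const_mul |c| hx
    rw [mul_zero] at h
    simpa only [Set.mem_ofPred_eq, avg_smul] using h

/-- Vectors whose averages are bounded along the times `n k`, `k` in a set. -/
def bddAlong (T : ℕ → X →L[ℝ] Y) (n : ℕ → ℕ) (S : Set ℕ) : Submodule ℝ X where
  carrier := {x | ∃ C : ℝ, ∀ᶠ k in atTop, k ∈ S → avg T x (n k) ≤ C}
  zero_mem' := ⟨0, by simp [avg_zero]⟩
  add_mem' := by
    rintro x y ⟨C, hC⟩ ⟨D, hD⟩
    refine ⟨C + D, ?_⟩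
    filter_upwards [hC, hD] with k h1 h2 hk
    exact (avg_add_le T _ x y).trans (add_le_add (h1 hk) (h2 hk))
  smul_mem' := by
    rintro c x ⟨C, hC⟩
    refine ⟨|c| * C, ?_⟩
    filter_upwards [hC] with k h1 hk
    rw [avg_smul]
    exact mul_le_mul_of_nonneg_left (h1 hk) (abs_nonneg c)

theorem avg_hasSum_le (T : ℕ → X →L[ℝ] Y) (n : ℕ) {u : ℕ → X} {v : X} {b : ℕ → ℝ} {C : ℝ}
    (hu : HasSum u v) (hb : HasSum b C) (h : ∀ k, avg T (u k) n ≤ b k) : avg T v n ≤ C := by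
  refine le_of_tendsto_of_tendsto (((avg_cont T n).tendsto v).comp hu) hb ?_
  refine Eventually.of_forall fun s => ?_
  refine le_trans ?_ (Finset.sum_le_sum fun i _ => h i)
  exact Finset.le_sum_of_subadditive (fun x => avg T x n) (avg_zero T n).le
    (fun x y => avg_add_le T n x y) s u

theorem key (T : ℕ → X →L[ℝ] Y) (hA : Dense (nullAlong T id : Set X)) (hsens : MeanSensitive T)
    (V : Set X) (hV : V ∈ 𝓝 (0 : X)) (K : ℝ) (n0 : ℕ) :
    ∃ a ∈ nullAlong T id, a ∈ V ∧ ∃ n, n0 ≤ n ∧ K < avg T a n := by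
  obtain ⟨δ, hδ, hs⟩ := hsens
  obtain ⟨ε, hε, hεV⟩ := Metric.mem_nhds_iff.1 hV
  set c : ℝ := (|K| + 1) / δ with hc
  have hcpos : 0 < c := by positivity
  obtain ⟨y, hy, hlim⟩ := hs 0 (ε / c) (by positivity)
  unfold msup at hlim
  have hfr := Filter.frequently_lt_of_lt_limsup (by isBoundedDefault) hlim
  obtain ⟨n, hn, hny⟩ := (hfr.and_eventually (eventually_ge_atTop n0)).exists
  have hn' : δ < avg T y n := by
    have : δ < mavg T 0 y n := by exact_mod_cast hn
    rwa [mavg_eq, zero_sub, avg_neg] at this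
  have hopen : IsOpen (Metric.ball (0 : X) ε ∩ {x | K < avg T x n}) :=
    Metric.isOpen_ball.inter (isOpen_lt continuous_const (avg_cont T n))
  obtain ⟨a, ha, haA⟩ := hA.inter_open_nonempty _ hopen ⟨c • y, by
    constructor
    · rw [mem_ball_zero_iff, norm_smul, Real.norm_of_nonneg hcpos.le]
      rw [zero_sub, norm_neg, lt_div_iff₀ hcpos] at hy
      linarith
    · simp only [Set.mem_ofPred_eq]
      rw [avg_smul, abs_of_pos hcpos]
      have : c * δ = |K| + 1 := by rw [hc]; field_simp
      have := mul_lt_mul_of_pos_left hn' hcpos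
      have := le_abs_self K
      linarith⟩
  exact ⟨a, haA, hεV ha.1, n, hny, ha.2⟩

theorem exists_blocks (T : ℕ → X →L[ℝ] Y) (hA : Dense (nullAlong T id : Set X))
    (hsens : MeanSensitive T) :
    ∃ (a : ℕ → X) (n m : ℕ → ℕ), (∀ k, ‖a k‖ ≤ (1 / 2) ^ k) ∧ (∀ k, k ≤ n k) ∧ (∀ k, k ≤ m k) ∧
      (∀ k : ℕ, (k : ℝ) ≤ avg T (a k) (n k)) ∧
      (∀ k i, i ≠ k → avg T (a i) (n k) ≤ (1 / 2) ^ i) ∧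
      (∀ k i, avg T (a i) (m k) ≤ (1 / 2) ^ k * (1 / 2) ^ i) := by
  let P : ℕ × X × ℕ × ℕ → Prop := fun w =>
    w.2.1 ∈ nullAlong T id ∧ ‖w.2.1‖ ≤ (1 / 2) ^ w.1 ∧ (w.1 : ℝ) ≤ avg T w.2.1 w.2.2.1 ∧
      avg T w.2.1 w.2.2.2 ≤ (1 / 2) ^ w.1 * (1 / 2) ^ w.1 ∧ w.1 ≤ w.2.2.1 ∧ w.1 ≤ w.2.2.2
  let r : ℕ × X × ℕ × ℕ → ℕ × X × ℕ × ℕ → Prop := fun w w' =>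
    w.1 < w'.1 ∧ avg T w.2.1 w'.2.2.1 ≤ (1 / 2) ^ w.1 ∧
      avg T w.2.1 w'.2.2.2 ≤ (1 / 2) ^ w'.1 * (1 / 2) ^ w.1 ∧
      avg T w'.2.1 w.2.2.1 ≤ (1 / 2) ^ w'.1 ∧
      avg T w'.2.1 w.2.2.2 ≤ (1 / 2) ^ w.1 * (1 / 2) ^ w'.1
  obtain ⟨f, hP, hr⟩ := exists_seq_of_forall_finset_exists P r (by
    intro s hs
    obtain ⟨k, hk⟩ : ∃ k : ℕ, ∀ w ∈ s, w.1 < k :=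
      ⟨s.sup (fun w => w.1) + 1, fun w hw => Nat.lt_succ_of_le (Finset.le_sup (f := fun w => w.1) hw)⟩
    have hpos : ∀ j : ℕ, (0 : ℝ) < (1 / 2) ^ j := fun j => by positivity
    have hsmall : ∀ (p : ℕ) (e : ℝ), 0 < e → ∀ᶠ x in 𝓝 (0 : X), avg T x p ≤ e := by
      intro p e he
      have := (avg_cont T p).tendsto 0
      simp only [avg_zero] at this
      exact this.eventually (ge_mem_nhds he)
    have hlate : ∀ x ∈ nullAlong T id, ∀ e : ℝ, 0 < e → ∀ᶠ p in atTop, avg T x p ≤ e := by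
      intro x hx e he
      have hx' : Tendsto (fun k => avg T x k) atTop (𝓝 0) := hx
      exact hx'.eventually (ge_mem_nhds he)
    have hV : ∀ᶠ x in 𝓝 (0 : X), ‖x‖ ≤ (1 / 2) ^ k ∧ ∀ w ∈ s,
        avg T x w.2.2.1 ≤ (1 / 2) ^ k ∧ avg T x w.2.2.2 ≤ (1 / 2) ^ w.1 * (1 / 2) ^ k := by
      refine Eventually.and ?_ ?_
      · have := (continuous_norm (E := X)).tendsto 0
        rw [norm_zero] at this
        exact this.eventually (ge_mem_nhds (hpos k))
      · rw [Filter.eventually_all_finset]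
        intro w _
        exact (hsmall _ _ (hpos k)).and (hsmall _ _ (mul_pos (hpos _) (hpos _)))
    have hn : ∀ᶠ p in atTop, k ≤ p ∧ ∀ w ∈ s, avg T w.2.1 p ≤ (1 / 2) ^ w.1 := by
      refine (eventually_ge_atTop k).and ?_
      rw [Filter.eventually_all_finset]
      intro w hw
      exact hlate _ (hs w hw).1 _ (hpos _)
    obtain ⟨n0, hn0⟩ := eventually_atTop.1 hn
    obtain ⟨a, haA, haV, n, hnn, hna⟩ := key T hA hsens _ hV k n0
    have hm : ∀ᶠ p in atTop, k ≤ p ∧ avg T a p ≤ (1 / 2) ^ k * (1 / 2) ^ k ∧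
        ∀ w ∈ s, avg T w.2.1 p ≤ (1 / 2) ^ k * (1 / 2) ^ w.1 := by
      refine (eventually_ge_atTop k).and
        ((hlate _ haA _ (mul_pos (hpos _) (hpos _))).and ?_)
      rw [Filter.eventually_all_finset]
      intro w hw
      exact hlate _ (hs w hw).1 _ (mul_pos (hpos _) (hpos _))
    obtain ⟨m, hm1, hm2, hm3⟩ := hm.exists
    obtain ⟨hn1, hn2⟩ := hn0 n hnn
    exact ⟨(k, a, n, m), ⟨haA, haV.1, hna.le, hm2, hn1, hm1⟩, fun w hw =>
      ⟨hk w hw, hn2 w hw, hm3 w hw, (haV.2 w hw).1, (haV.2 w hw).2⟩⟩)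
  have hmono : StrictMono fun i => (f i).1 := fun i j hij => (hr i j hij).1
  have hid : ∀ i, i ≤ (f i).1 := fun i => hmono.id_le i
  have hle : ∀ i, ((1 : ℝ) / 2) ^ (f i).1 ≤ (1 / 2) ^ i := fun i =>
    pow_le_pow_of_le_one (by norm_num) (by norm_num) (hid i)
  have hle2 : ∀ i j, ((1 : ℝ) / 2) ^ (f i).1 * (1 / 2) ^ (f j).1 ≤ (1 / 2) ^ i * (1 / 2) ^ j :=
    fun i j => mul_le_mul (hle i) (hle j) (by positivity) (by positivity)
  refine ⟨fun k => (f k).2.1, fun k => (f k).2.2.1, fun k => (f k).2.2.2,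
    fun k => (hP k).2.1.trans (hle k), fun k => (hid k).trans (hP k).2.2.2.2.1,
    fun k => (hid k).trans (hP k).2.2.2.2.2, fun k => ?_, fun k i hik => ?_, fun k i => ?_⟩
  · exact le_trans (by exact_mod_cast hid k) (hP k).2.2.1
  · rcases lt_or_gt_of_ne hik with h | h
    · exact (hr i k h).2.1.trans (hle i)
    · exact (hr k i h).2.2.2.1.trans (hle i)
  · rcases lt_trichotomy i k with h | h | h
    · exact (hr i k h).2.2.1.trans (hle2 k i)
    · subst h
      exact (hP i).2.2.2.1.trans (hle2 i i)
    · exact (hr k i h).2.2.2.2.trans (hle2 k i)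

/-- If the mean asymptotic relation is dense and `(T i)` is mean sensitive, then
`(T i)` has a dense absolutely mean irregular manifold, i.e. a dense vector subspace
all of whose non-zero vectors are absolutely mean irregular. -/
theorem exists_dense_absolutelyMeanIrregular_manifold
    [CompleteSpace X] [TopologicalSpace.SeparableSpace X] (T : ℕ → X →L[ℝ] Y)
    (hdense : Dense {p : X × X | Filter.Tendsto (mavg T p.1 p.2) Filter.atTop (nhds 0)})
    (hsens : MeanSensitive T) :
    ∃ Z : Submodule ℝ X, Dense (Z : Set X) ∧
      ∀ z ∈ Z, z ≠ 0 → (ainf T z = 0 ∧ asup T z = ⊤) := by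
  have hA : Dense (nullAlong T id : Set X) := by
    have hsurj : Function.Surjective fun p : X × X => p.1 - p.2 := fun x => ⟨(x, 0), by simp⟩
    have h := hsurj.denseRange.dense_image (continuous_fst.sub continuous_snd) hdense
    refine h.mono ?_
    rintro _ ⟨p, hp, rfl⟩
    simp only [Set.mem_ofPred_eq, mavg_eq] at hp
    exact hp
  obtain ⟨a, n, m, ha, hn, hm, hbig, hna, hma⟩ := exists_blocks T hA hsens
  have hnt : Tendsto n atTop atTop := tendsto_atTop_mono hn tendsto_id
  have hmt : Tendsto m atTop atTop := tendsto_atTop_mono hm tendsto_id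
  have : TopologicalSpace.SeparableSpace (nullAlong T id) := by
    have := UniformSpace.secondCountable_of_separable X
    infer_instance
  let d : ℕ → X := fun p => (TopologicalSpace.denseSeq (nullAlong T id) p : X)
  have hdA : ∀ p, d p ∈ nullAlong T id := fun p => Subtype.coe_prop _
  have hd : DenseRange d := by
    have h1 : DenseRange (Subtype.val : nullAlong T id → X) := by
      rw [DenseRange, Subtype.range_coe]; exact hA
    exact h1.comp (TopologicalSpace.denseRange_denseSeq _) continuous_subtype_val
  -- the blocks
  let J : ℕ → Set ℕ := fun j => {k | (Nat.unpair k).1 = j}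
  let u : ℕ → ℕ → X := fun j k => (J j).indicator a k
  have hgeo : Summable fun k : ℕ => ((1 : ℝ) / 2) ^ k := summable_geometric_two
  have hsum : ∀ j, Summable (u j) := fun j => (hgeo.of_norm_bounded ha).indicator _
  let S : ℕ → X := fun j => ∑' k, u j k
  have hS : ∀ j, HasSum (u j) (S j) := fun j => (hsum j).hasSum
  have hu : ∀ j k p, avg T (u j k) p ≤ avg T (a k) p := by
    intro j k p
    by_cases hk : k ∈ J j
    · simp [u, Set.indicator_of_mem hk]
    · simp [u, Set.indicator_of_notMem hk, avg_zero, avg_nonneg]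
  have hSnull : ∀ j, S j ∈ nullAlong T m := by
    intro j
    have hb : ∀ k, avg T (S j) (m k) ≤ (1 / 2) ^ k * 2 := fun k =>
      avg_hasSum_le T (m k) (hS j) (hasSum_geometric_two.mul_left ((1 / 2 : ℝ) ^ k))
        fun i => (hu j i _).trans (hma k i)
    have ht : Tendsto (fun k : ℕ => ((1 : ℝ) / 2) ^ k * 2) atTop (𝓝 0) := by
      simpa using (tendsto_pow_atTop_nhds_zero_of_lt_one (r := (1 / 2 : ℝ))
        (by norm_num) (by norm_num)).mul_const 2
    exact squeeze_zero (fun k => avg_nonneg T _ _) hb ht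
  have hSbdd : ∀ i j, i ≠ j → S i ∈ bddAlong T n (J j) := by
    intro i j hij
    refine ⟨2, Eventually.of_forall fun k hk => ?_⟩
    refine avg_hasSum_le T (n k) (hS i) hasSum_geometric_two fun l => ?_
    by_cases hlk : l = k
    · subst hlk
      have : l ∉ J i := fun h => hij (h.symm.trans hk)
      simp [u, Set.indicator_of_notMem this, avg_zero]
    · exact (hu i l _).trans (hna k l hlk)
  have hSunb : ∀ j, S j ∉ bddAlong T n (J j) := by
    rintro j ⟨C, hC⟩
    have hlow : ∀ k ∈ J j, (k : ℝ) - 2 ≤ avg T (S j) (n k) := by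
      intro k hk
      have h1 : HasSum (Function.update (u j) k 0) (0 - u j k + S j) := (hS j).update k 0
      have h2 : avg T (0 - u j k + S j) (n k) ≤ 2 := by
        refine avg_hasSum_le T (n k) h1 hasSum_geometric_two fun l => ?_
        by_cases hlk : l = k
        · subst hlk
          simp [avg_zero]
        · rw [Function.update_of_ne hlk]
          exact (hu j l _).trans (hna k l hlk)
      have h3 : u j k = a k := by simp [u, Set.indicator_of_mem hk]
      have h4 := avg_add_le T (n k) (S j) (-(0 - u j k + S j))
      rw [avg_neg] at h4
      have h5 : S j + -(0 - u j k + S j) = a k := by rw [h3]; abel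
      rw [h5] at h4
      have := hbig k
      linarith
    obtain ⟨K, hK⟩ := eventually_atTop.1 hC
    obtain ⟨N, hN⟩ := exists_nat_gt (C + 2)
    let k := Nat.pair j (max K N)
    have hkJ : k ∈ J j := by simp [J, k]
    have hkge : max K N ≤ k := Nat.right_le_pair _ _
    have h1 := hK k ((le_max_left _ _).trans hkge) hkJ
    have h2 := hlow k hkJ
    have h3 : (N : ℝ) ≤ k := by exact_mod_cast (le_max_right _ _).trans hkge
    linarith
  have hdnull : ∀ p, d p ∈ nullAlong T m := fun p =>
    Tendsto.comp (show Tendsto (fun k => avg T (d p) k) atTop (𝓝 0) from hdA p) hmt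
  have hdbdd : ∀ p j, d p ∈ bddAlong T n (J j) := by
    intro p j
    have : Tendsto (fun k => avg T (d p) (n k)) atTop (𝓝 0) :=
      Tendsto.comp (show Tendsto (fun k => avg T (d p) k) atTop (𝓝 0) from hdA p) hnt
    exact ⟨1, (this.eventually (ge_mem_nhds one_pos)).mono fun k hk _ => hk⟩
  let t : ℕ → ℝ := fun j => 1 / ((Nat.unpair j).2 + 1 : ℝ)
  have ht : ∀ j, t j ≠ 0 := fun j => by simp only [t]; positivity
  let z : ℕ → X := fun j => d (Nat.unpair j).1 + t j • S j
  have hznull : ∀ j, z j ∈ nullAlong T m := fun j =>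
    Submodule.add_mem _ (hdnull _) (Submodule.smul_mem _ _ (hSnull j))
  have hzbdd : ∀ i j, i ≠ j → z i ∈ bddAlong T n (J j) := fun i j hij =>
    Submodule.add_mem _ (hdbdd _ _) (Submodule.smul_mem _ _ (hSbdd i j hij))
  have hzunb : ∀ j, z j ∉ bddAlong T n (J j) := by
    intro j h
    have h1 := (Submodule.add_mem_iff_right _ (hdbdd (Nat.unpair j).1 j)).1 h
    exact hSunb j ((Submodule.smul_mem_iff _ (ht j)).1 h1)
  have hSnorm : ∀ j, ‖S j‖ ≤ 2 := by
    intro j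
    refine tsum_of_norm_bounded hasSum_geometric_two fun k => ?_
    exact (norm_indicator_le_norm_self _ _).trans (ha k)
  refine ⟨Submodule.span ℝ (Set.range z), ?_, ?_⟩
  · have hcl : Set.range d ⊆ closure (Submodule.span ℝ (Set.range z) : Set X) := by
      rintro _ ⟨p, rfl⟩
      refine mem_closure_of_tendsto (f := fun q => z (Nat.pair p q)) (b := atTop) ?_
        (Eventually.of_forall fun q => Submodule.subset_span ⟨_, rfl⟩)
      have h0 : Tendsto (fun q => t (Nat.pair p q) • S (Nat.pair p q)) atTop (𝓝 0) := by
        have hb : ∀ q : ℕ, ‖t (Nat.pair p q) • S (Nat.pair p q)‖ ≤ 1 / ((q : ℝ) + 1) * 2 := by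
          intro q
          have e : t (Nat.pair p q) = 1 / ((q : ℝ) + 1) := by simp [t]
          rw [norm_smul, e, Real.norm_of_nonneg (by positivity)]
          exact mul_le_mul_of_nonneg_left (hSnorm _) (by positivity)
        refine squeeze_zero_norm hb ?_
        simpa using (tendsto_one_div_add_atTop_nhds_zero_nat (𝕜 := ℝ)).mul_const 2
      have h1 := h0.const_add (d p)
      rw [add_zero] at h1
      simpa [z] using h1
    have h2 : Dense (closure (Submodule.span ℝ (Set.range z) : Set X)) := Dense.mono hcl hd
    exact dense_closure.1 h2
  · intro x hx hx0
    constructor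
    · have hxn : x ∈ nullAlong T m :=
        (Submodule.span_le.2 (by rintro _ ⟨j, rfl⟩; exact hznull j)) hx
      have hxt : Tendsto (fun k => ((avg T x (m k) : ℝ) : EReal)) atTop (𝓝 ((0 : ℝ) : EReal)) :=
        (continuous_coe_real_ereal.tendsto 0).comp hxn
      apply le_antisymm
      · unfold ainf
        calc liminf (fun n => (avg T x n : EReal)) atTop
            ≤ liminf (fun n => (avg T x n : EReal)) (map m atTop) := liminf_le_liminf_of_le hmt
          _ = 0 := hxt.liminf_eq
      · unfold ainf
        refine le_liminf_of_le (by isBoundedDefault) (Eventually.of_forall fun k => ?_)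
        exact_mod_cast avg_nonneg T k x
    · by_contra hne
      have hlt : asup T x < ⊤ := lt_top_iff_ne_top.2 hne
      obtain ⟨C, hC1, _⟩ := EReal.lt_iff_exists_real_btwn.1 hlt
      have hev : ∀ᶠ p in atTop, avg T x p ≤ C := by
        refine (eventually_lt_of_limsup_lt hC1 (by isBoundedDefault)).mono fun p hp => ?_
        exact_mod_cast hp.le
      have hxb : ∀ j, x ∈ bddAlong T n (J j) := fun j =>
        ⟨C, (hnt.eventually hev).mono fun k hk _ => hk⟩
      obtain ⟨c, rfl⟩ := (Finsupp.mem_span_range_iff_exists_finsupp).1 hx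
      have hc : c ≠ 0 := by
        rintro rfl
        simp at hx0
      obtain ⟨j, hj⟩ := Finsupp.ne_iff.1 hc
      have hj' : c j ≠ 0 := by simpa using hj
      have h1 := hxb j
      rw [Finsupp.sum, ← Finset.add_sum_erase _ _ (Finsupp.mem_support_iff.2 hj')] at h1
      have h2 : ∑ i ∈ c.support.erase j, c i • z i ∈ bddAlong T n (J j) :=
        Submodule.sum_mem _ fun i hi =>
          Submodule.smul_mem _ _ (hzbdd i j (Finset.ne_of_mem_erase hi))
      have h3 := (Submodule.add_mem_iff_left _ h2).1 h1
      exact hzunb j ((Submodule.smul_mem_iff _ hj').1 h3)
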